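/- Suppose the primitive set ℬ ⊆ ℕ is taut. Then X_η = X_φ, i.e. the orbit closure of η under the left shift on {0,1}^ℤ equals the closure of φ(H), where H is the closure of the image of the diagonal embedding Δ : ℤ → ∏_{b∈ℬ} ℤ/bℤ and φ : H → {0,1}^ℤ is defined by φ(h)(n) = 1 iff h_b + n ≢ 0 (mod b) for all b ∈ ℬ. -/

import Mathlib

open Filter Set Topology MeasureTheory

open scoped Classical

noncomputable section

/-- The diagonal embedding `Δ : ℤ → ∏_{b ∈ B} ℤ/bℤ`. -/
def diagEmb (B : Set ℕ) : ℤ →+ ((b : B) → ZMod b) where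
  toFun n := fun b => (n : ZMod b)
  map_zero' := by ext b; simp
  map_add' m n := by ext b; simp [Int.cast_add]

/-- `H`, the topological closure of `Δ(ℤ)`, as a (closed) subgroup of `∏_{b ∈ B} ℤ/bℤ`. -/
def Hgrp (B : Set ℕ) : AddSubgroup ((b : B) → ZMod b) :=
  (diagEmb B).range.topologicalClosure

instance (B : Set ℕ) [∀ b : B, NeZero (b : ℕ)] : CompactSpace (Hgrp B) :=
  isCompact_iff_compactSpace.mp ((AddSubgroup.isClosed_topologicalClosure _).isCompact)

instance (B : Set ℕ) : MeasurableSpace (Hgrp B) := borel _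

instance (B : Set ℕ) : BorelSpace (Hgrp B) := ⟨rfl⟩

/-- The normalized Haar measure `m_H` on the compact abelian group `H`. -/
def mH (B : Set ℕ) [∀ b : B, NeZero (b : ℕ)] : Measure (Hgrp B) :=
  Measure.addHaarMeasure ⊤

/-- The window `W_{B'} ⊆ H` determined by a subset `B' ⊆ B`. -/
def Wset (B : Set ℕ) (B' : Set ℕ) : Set (Hgrp B) :=
  {h | ∀ b : B, (b : ℕ) ∈ B' → (h : (b : B) → ZMod b) b ≠ 0}

/-- The set of multiples `M_B ⊆ ℤ` of a set `B ⊆ ℕ`. -/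
def multiplesZ (B : Set ℕ) : Set ℤ := {n : ℤ | ∃ b ∈ B, (b : ℤ) ∣ n}

/-- The `B`-free integers `F_B = ℤ ∖ M_B`. -/
def freeZ (B : Set ℕ) : Set ℤ := (multiplesZ B)ᶜ

/-- The logarithmically weighted averages `(1/log n) ∑_{k=1}^n 1_A(k)/k`. -/
def logWeight (A : Set ℤ) (n : ℕ) : ℝ :=
  (Real.log n)⁻¹ * ∑ k ∈ Finset.Icc 1 n, A.indicator (fun m : ℤ => ((m : ℝ))⁻¹) (k : ℤ)

/-- The lower logarithmic density of a set `A ⊆ ℤ`. -/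
def logDensLow (A : Set ℤ) : ℝ := liminf (logWeight A) atTop

/-- `A ⊆ ℤ` has logarithmic density `d`. -/
def HasLogDensity (A : Set ℤ) (d : ℝ) : Prop := Tendsto (logWeight A) atTop (𝓝 d)

/-- `B` is primitive: no element divides another one. -/
def Primitive (B : Set ℕ) : Prop := ∀ b ∈ B, ∀ b' ∈ B, b ∣ b' → b = b'

/-- `B` is Behrend: its set of multiples has logarithmic density one. -/
def IsBehrend (B : Set ℕ) : Prop := logDensLow (multiplesZ B) = 1

/-- `B` is taut: removing any element strictly decreases the logarithmic density
of the set of multiples. -/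
def IsTaut (B : Set ℕ) : Prop :=
  ∀ b ∈ B, logDensLow (multiplesZ (B \ {b})) < logDensLow (multiplesZ B)

/-- `B̃^(N)`: the elements of `B` having no prime factor `≤ N`. -/
def Btilde (B : Set ℕ) (N : ℕ) : Set ℕ := {b ∈ B | ∀ p : ℕ, p.Prime → p ∣ b → N < p}

/-- `B^(N)`: the elements of `B` all of whose prime factors are `≤ N`. -/
def Bsmooth (B : Set ℕ) (N : ℕ) : Set ℕ := {b ∈ B | ∀ p : ℕ, p.Prime → p ∣ b → p ≤ N}

/-- `η ∈ {0,1}^ℤ`, the indicator function of the `B`-free integers. -/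
def eta (B : Set ℕ) : ℤ → Bool := fun n => decide (n ∈ freeZ B)

/-- `X_η`, the orbit closure of `η` under the left shift on `{0,1}^ℤ`. -/
def Xeta (B : Set ℕ) : Set (ℤ → Bool) :=
  closure (Set.range fun m : ℤ => fun n : ℤ => eta B (n + m))

/-- The coding function `φ : H → {0,1}^ℤ`, `φ(h)(n) = 1` iff `h_b + n ≠ 0 mod b`
for all `b ∈ B`. -/
def phiW (B : Set ℕ) : Hgrp B → ℤ → Bool :=
  fun h n => decide (∀ b : B, (h : (b : B) → ZMod b) b + (n : ZMod b) ≠ 0)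

/-!
The shift of `η` by `a ∈ ℤ` is `φ(Δ(a))`, so `X_η ⊆ X_φ`. Conversely, let `h ∈ H` and let `I ⊆ ℤ` be
a finite window. For `N` large, the elements of `B` with all prime factors `≤ N` produce every `0`
of `φ(h)` on `I`; by primitivity there are only finitely many of them, so some integer `a` is
congruent to `h` modulo each. It remains to move `a` within its class modulo a suitable `N`-smooth
`Q`, so that the positions `K ⊆ I` of the `1`s of `φ(h)` become `B`-free. The class can be chosen so
that each `b = d * c ∈ B` (`d` the `N`-smooth and `c ≠ 1` the `N`-rough part) which divides some
`x + k`, `k ∈ K`, has `d ∣ Q`. It is then enough that `x + K` avoids the multiples of the finitely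
many sets `{c ≠ 1 | d * c ∈ B}`, `d ∣ Q`, restricted to rough elements.

This is where tautness enters: the multiples of the `N`-rough elements of such a set have means
tending to `0` as `N → ∞`. Otherwise, repeatedly adjoining coprime finite pieces gives finite sets
`A` of cofactors whose multiples have mean arbitrarily close to `1`, and since `d * a ∈ B` for
`a ∈ A`, an element `d * c₀` of `B` with `c₀ ∉ A` would be removable without lowering the
logarithmic density.

The means are values of a translation-invariant mean on `ℤ` which is approximated from inside on
sets of multiples by finite subsets, as the logarithmic density is by the Davenport–Erdős theorem.
It is a limit of the weights `n⁻ˢ / ζ(s)` as `s → 1⁺`: their values on a set of multiples increase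
as `s` decreases, because `ζ(s) / ζ(s + t)` has nonnegative Dirichlet coefficients.
-/

/-- Finitely additive, translation-invariant probability measures on all subsets of `ℤ`. They stand
in for the logarithmic density, which is not defined on all of these sets. -/
structure IsInvariantMean (m : Set ℤ → ℝ) : Prop where
  nonneg : ∀ E, 0 ≤ m E
  univ : m Set.univ = 1
  union : ∀ {E F}, Disjoint E F → m (E ∪ F) = m E + m F
  preimage_add_one : ∀ E, m ((· + 1) ⁻¹' E) = m E

namespace IsInvariantMean

variable {m m' : Set ℤ → ℝ}

lemma diff (hm : IsInvariantMean m) {E F : Set ℤ} (h : E ⊆ F) : m (F \ E) = m F - m E := by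
  rw [eq_sub_iff_add_eq', ← hm.union disjoint_sdiff_right, Set.union_sdiff_cancel h]

lemma empty (hm : IsInvariantMean m) : m ∅ = 0 := by
  simpa using hm.diff (Set.Subset.refl ∅)

lemma compl (hm : IsInvariantMean m) (E : Set ℤ) : m Eᶜ = 1 - m E := by
  rw [Set.compl_eq_univ_sdiff, hm.diff (Set.subset_univ E), hm.univ]

lemma mono (hm : IsInvariantMean m) {E F : Set ℤ} (h : E ⊆ F) : m E ≤ m F :=
  sub_nonneg.mp (hm.diff h ▸ hm.nonneg _)

lemma union_le (hm : IsInvariantMean m) (E F : Set ℤ) : m (E ∪ F) ≤ m E + m F := by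
  rw [← Set.union_sdiff_self, hm.union disjoint_sdiff_right]
  gcongr
  exact hm.mono Set.sdiff_subset

lemma biUnion_le (hm : IsInvariantMean m) {ι : Type*} (s : Finset ι) (E : ι → Set ℤ) :
    m (⋃ i ∈ s, E i) ≤ ∑ i ∈ s, m (E i) := by
  induction s using Finset.induction with
  | empty => simp [hm.empty]
  | insert i s hi ih =>
    rw [Finset.set_biUnion_insert, Finset.sum_insert hi]
    exact (hm.union_le _ _).trans (add_le_add_right ih _)

lemma biUnion (hm : IsInvariantMean m) {ι : Type*} (s : Finset ι) {E : ι → Set ℤ}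
    (hE : (s : Set ι).PairwiseDisjoint E) : m (⋃ i ∈ s, E i) = ∑ i ∈ s, m (E i) := by
  induction s using Finset.induction with
  | empty => simp [hm.empty]
  | insert i s hi ih =>
    have hdisj : Disjoint (E i) (⋃ j ∈ s, E j) := Set.disjoint_iUnion₂_right.mpr fun j hj =>
      hE (Finset.mem_insert_self i s) (Finset.mem_insert_of_mem hj)
        (ne_of_mem_of_not_mem hj hi).symm
    rw [Finset.set_biUnion_insert, Finset.sum_insert hi, hm.union hdisj,
      ih (hE.subset (Finset.coe_subset.mpr (Finset.subset_insert i s)))]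

lemma preimage_add (hm : IsInvariantMean m) (a : ℤ) (E : Set ℤ) : m ((· + a) ⁻¹' E) = m E := by
  have step (a : ℤ) : m ((· + (a + 1)) ⁻¹' E) = m ((· + a) ⁻¹' E) := by
    rw [← hm.preimage_add_one ((· + a) ⁻¹' E), Set.preimage_preimage]
    simp only [add_assoc, add_comm (1 : ℤ)]
  induction a with
  | zero => simp
  | succ a ih => rw [step, ih]
  | pred a ih => rw [← step, sub_add_cancel, ih]

end IsInvariantMean

section Periodic

variable {m m' : Set ℤ → ℝ} {E F : Set ℤ} {q r : ℕ} [NeZero q] [NeZero r]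

lemma exists_eq_preimage_zmod (hE : Function.Periodic (· ∈ E) (q : ℤ)) :
    ∃ S : Finset (ZMod q), E = (↑) ⁻¹' (S : Set (ZMod q)) := by
  refine ⟨(((↑) : ℤ → ZMod q) '' E).toFinset, ?_⟩
  rw [Set.coe_toFinset]
  refine (Set.subset_preimage_image _ E).antisymm ?_
  rintro x ⟨y, hy, hyx⟩
  obtain ⟨k, hk⟩ := ((ZMod.intCast_eq_intCast_iff_dvd_sub y x q).mp hyx)
  rw [sub_eq_iff_eq_add'.mp hk, mul_comm]
  exact (hE.int_mul k y).mpr hy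

namespace IsInvariantMean

lemma preimage_zmod_singleton (hm : IsInvariantMean m) (a : ZMod q) :
    m ((↑) ⁻¹' {a}) = (q : ℝ)⁻¹ := by
  have translate (a : ZMod q) : m ((↑) ⁻¹' {a}) = m ((↑) ⁻¹' {(0 : ZMod q)}) := by
    rw [← hm.preimage_add (a.val : ℤ)]
    congr 1
    ext x
    simp
  have total : ∑ a : ZMod q, m ((↑) ⁻¹' {a}) = 1 := by
    rw [← hm.biUnion _ fun a _ b _ hab =>
      (Set.disjoint_singleton.mpr hab).preimage (Int.cast : ℤ → ZMod q), ← hm.univ]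
    congr 1
    ext x
    simp
  rw [Finset.sum_congr rfl fun b _ => (translate b).trans (translate a).symm, Finset.sum_const,
    Finset.card_univ, ZMod.card, nsmul_eq_mul] at total
  exact eq_inv_of_mul_eq_one_right total

lemma preimage_zmod (hm : IsInvariantMean m) (S : Finset (ZMod q)) :
    m ((↑) ⁻¹' (S : Set (ZMod q))) = S.card / q := by
  have h := hm.biUnion S (E := fun a => ((↑) : ℤ → ZMod q) ⁻¹' {a}) fun a _ b _ hab =>
    (Set.disjoint_singleton.mpr hab).preimage _
  simp only [hm.preimage_zmod_singleton, Finset.sum_const, nsmul_eq_mul] at h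
  rw [div_eq_mul_inv, ← h, ← Set.preimage_iUnion₂]
  exact congrArg m (congrArg _ (Set.biUnion_of_singleton _).symm)

lemma eq_of_periodic (hm : IsInvariantMean m) (hm' : IsInvariantMean m')
    (hE : Function.Periodic (· ∈ E) (q : ℤ)) : m E = m' E := by
  obtain ⟨S, rfl⟩ := exists_eq_preimage_zmod hE
  rw [hm.preimage_zmod, hm'.preimage_zmod]

lemma inter_of_coprime (hm : IsInvariantMean m) (hqr : q.Coprime r)
    (hE : Function.Periodic (· ∈ E) (q : ℤ)) (hF : Function.Periodic (· ∈ F) (r : ℤ)) :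
    m (E ∩ F) = m E * m F := by
  obtain ⟨S, rfl⟩ := exists_eq_preimage_zmod hE
  obtain ⟨T, rfl⟩ := exists_eq_preimage_zmod hF
  have : NeZero (q * r) := ⟨mul_ne_zero (NeZero.ne q) (NeZero.ne r)⟩
  let e := (ZMod.chineseRemainder hqr).symm.toEquiv
  have : ((↑) ⁻¹' (S : Set (ZMod q)) ∩ (↑) ⁻¹' (T : Set (ZMod r)) : Set ℤ) =
      (↑) ⁻¹' (((S ×ˢ T).map e.toEmbedding : Finset (ZMod (q * r))) : Set (ZMod (q * r))) := by
    ext x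
    rw [Set.mem_preimage, Finset.mem_coe, Finset.mem_map_equiv, Finset.mem_product]
    simp [e]
  rw [this, hm.preimage_zmod, hm.preimage_zmod, hm.preimage_zmod, Finset.card_map,
    Finset.card_product]
  push_cast
  rw [div_mul_div_comm]

end IsInvariantMean

lemma periodic_modEq (a : ℤ) (q : ℕ) : Function.Periodic (· ∈ {x | x ≡ a [ZMOD q]}) (q : ℤ) :=
  fun x => propext <| by simp [Int.ModEq]

lemma IsInvariantMean.modEq (hm : IsInvariantMean m) (a : ℤ) :
    m {x | x ≡ a [ZMOD q]} = (q : ℝ)⁻¹ := by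
  rw [← hm.preimage_zmod_singleton (a : ZMod q)]
  congr 1
  ext x
  simp [ZMod.intCast_eq_intCast_iff]

end Periodic

lemma periodic_multiplesZ (A : Finset ℕ) :
    Function.Periodic (· ∈ multiplesZ A) ((∏ a ∈ A, a : ℕ) : ℤ) := by
  refine fun x => propext <| exists_congr fun a => and_congr_right fun ha => ?_
  exact dvd_add_left (Int.natCast_dvd_natCast.mpr (Finset.dvd_prod_of_mem (fun a => a) ha))

open scoped ENNReal

lemma exists_isInvariantMean_tendsto {ι : Type*} (U : Ultrafilter ι) (ν : ι → Measure ℤ)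
    [∀ i, IsFiniteMeasure (ν i)] (huniv : Tendsto (fun i => (ν i).real Set.univ) U (𝓝 1))
    {ε : ι → ℝ} (hε : Tendsto ε U (𝓝 0))
    (hshift : ∀ᶠ i in U, ∀ E, (ν i).real E ≤ ε i + (ν i).real ((· + 1) ⁻¹' E)) :
    ∃ m, IsInvariantMean m ∧ ∀ E, Tendsto (fun i => (ν i).real E) U (𝓝 (m E)) := by
  have hconv (E : Set ℤ) : ∃ a, Tendsto (fun i => (ν i).real E) U (𝓝 a) := by
    have hbdd : ∀ᶠ i in U, (ν i).real E ∈ Set.Icc (0 : ℝ) 2 := by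
      filter_upwards [huniv.eventually_le_const one_lt_two] with i hi
      exact ⟨measureReal_nonneg, (measureReal_mono (Set.subset_univ E)).trans hi⟩
    obtain ⟨a, -, ha⟩ := isCompact_Icc.ultrafilter_le_nhds (U.map _) (le_principal_iff.mpr hbdd)
    exact ⟨a, ha⟩
  choose m hm using hconv
  have union {E F : Set ℤ} (h : Disjoint E F) : m (E ∪ F) = m E + m F := by
    refine tendsto_nhds_unique (hm _) (((hm E).add (hm F)).congr fun i => ?_)
    rw [measureReal_union h (MeasurableSet.of_discrete)]
  have univ : m Set.univ = 1 := tendsto_nhds_unique (hm _) huniv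
  have le_shift (E : Set ℤ) : m E ≤ m ((· + 1) ⁻¹' E) := by
    simpa only [zero_add] using
      le_of_tendsto_of_tendsto (hm E) (hε.add (hm _)) (hshift.mono fun i hi => hi E)
  have add_compl (E : Set ℤ) : m E + m Eᶜ = 1 := by
    rw [← union disjoint_compl_right, Set.union_compl_self, univ]
  refine ⟨m, ⟨fun E => ge_of_tendsto' (hm E) fun i => measureReal_nonneg, univ, union,
    fun E => le_antisymm ?_ (le_shift E)⟩, hm⟩
  have := le_shift Eᶜ
  rw [Set.preimage_compl] at this
  linarith [add_compl E, add_compl ((· + 1) ⁻¹' E)]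

/-- The measure on `ℤ` putting mass `w k` at each natural number `k`. -/
def weightMeasure (w : ℕ → ℝ≥0∞) : Measure ℤ :=
  Measure.sum fun k => w k • Measure.dirac (k : ℤ)

lemma weightMeasure_apply (w : ℕ → ℝ≥0∞) (E : Set ℤ) :
    weightMeasure w E = ∑' k, ((↑) ⁻¹' E : Set ℕ).indicator w k := by
  rw [weightMeasure, Measure.sum_apply _ MeasurableSet.of_discrete]
  refine tsum_congr fun k => ?_
  by_cases hk : (k : ℤ) ∈ E <;> simp [hk]

lemma weightMeasure_univ (w : ℕ → ℝ≥0∞) : weightMeasure w Set.univ = ∑' k, w k := by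
  simp [weightMeasure_apply]

lemma weightMeasure_le_add_preimage {w : ℕ → ℝ≥0∞} (h0 : w 0 = 0)
    (hw : AntitoneOn w (Set.Ici 1)) (E : Set ℤ) :
    weightMeasure w E ≤ w 1 + weightMeasure w ((· + 1) ⁻¹' E) := by
  set f : ℕ → ℝ≥0∞ := ((↑) ⁻¹' E : Set ℕ).indicator w
  set g : ℕ → ℝ≥0∞ := ((↑) ⁻¹' ((· + 1) ⁻¹' E : Set ℤ) : Set ℕ).indicator w
  have hfg (k : ℕ) : f (k + 1 + 1) ≤ g (k + 1) := by
    by_cases hk : (k : ℤ) + 1 + 1 ∈ E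
    · simpa [f, g, Set.indicator, hk] using hw (by simp) (by simp) (Nat.le_succ (k + 1))
    · simp [f, hk]
  have hf0 : f 0 = 0 := by simp [f, Set.indicator, h0]
  have hg0 : g 0 = 0 := by simp [g, Set.indicator, h0]
  calc weightMeasure w E = ∑' k, f k := weightMeasure_apply w E
    _ = f 1 + ∑' k, f (k + 1 + 1) := by
      rw [tsum_eq_zero_add' ENNReal.summable, hf0, zero_add, tsum_eq_zero_add' ENNReal.summable]
    _ ≤ w 1 + ∑' k, g (k + 1) := by
      gcongr with k
      · exact Set.indicator_le_self _ _ _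
      · exact hfg k
    _ = w 1 + weightMeasure w ((· + 1) ⁻¹' E) := by
      rw [weightMeasure_apply, tsum_eq_zero_add' (f := g) ENNReal.summable, hg0, zero_add]

lemma exists_isInvariantMean_tendsto_weightMeasure {ι : Type*} (U : Ultrafilter ι)
    {w : ι → ℕ → ℝ≥0∞} [∀ i, IsFiniteMeasure (weightMeasure (w i))]
    (hzero : ∀ i, w i 0 = 0) (hanti : ∀ᶠ i in U, AntitoneOn (w i) (Set.Ici 1))
    (huniv : Tendsto (fun i => (weightMeasure (w i)).real Set.univ) U (𝓝 1))
    (hone : Tendsto (fun i => (w i 1).toReal) U (𝓝 0)) :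
    ∃ m, IsInvariantMean m ∧ ∀ E, Tendsto (fun i => (weightMeasure (w i)).real E) U (𝓝 (m E)) := by
  refine exists_isInvariantMean_tendsto U _ huniv hone (hanti.mono fun i hi E => ?_)
  have hfin : w i 1 ≠ ∞ := ENNReal.ne_top_of_tsum_ne_top
    (weightMeasure_univ (w i) ▸ measure_ne_top (weightMeasure (w i)) Set.univ) 1
  rw [measureReal_def, measureReal_def, ← ENNReal.toReal_add hfin (measure_ne_top _ _)]
  exact ENNReal.toReal_mono (ENNReal.add_ne_top.mpr ⟨hfin, measure_ne_top _ _⟩)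
    (weightMeasure_le_add_preimage (hzero i) hi E)

section LogWeight

/-- The weights `1/(k log n)`, `1 ≤ k ≤ n`, of the averages `logWeight _ n`. -/
def harmonicWeight (n : ℕ) : ℕ → ℝ≥0∞ :=
  (Set.Icc 1 n).indicator fun k => ENNReal.ofReal ((Real.log n)⁻¹ * (k : ℝ)⁻¹)

lemma harmonicWeight_of_mem {n k : ℕ} (hk : k ∈ Set.Icc 1 n) :
    harmonicWeight n k = ENNReal.ofReal ((Real.log n)⁻¹ * (k : ℝ)⁻¹) :=
  Set.indicator_of_mem hk _

lemma harmonicWeight_of_notMem {n k : ℕ} (hk : k ∉ Set.Icc 1 n) : harmonicWeight n k = 0 :=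
  Set.indicator_of_notMem hk _

lemma weightMeasure_harmonicWeight (n : ℕ) (E : Set ℤ) : weightMeasure (harmonicWeight n) E =
    ∑ k ∈ Finset.Icc 1 n, ((↑) ⁻¹' E : Set ℕ).indicator (harmonicWeight n) k := by
  rw [weightMeasure_apply]
  refine tsum_eq_sum fun k hk => Set.indicator_apply_eq_zero.mpr fun _ => ?_
  exact harmonicWeight_of_notMem (by simpa using hk)

instance (n : ℕ) : IsFiniteMeasure (weightMeasure (harmonicWeight n)) := by
  refine ⟨(weightMeasure_harmonicWeight n _).trans_lt (ENNReal.sum_lt_top.mpr fun k hk => ?_)⟩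
  simp [harmonicWeight_of_mem (Finset.mem_Icc.mp hk)]

lemma weightMeasure_harmonicWeight_real (n : ℕ) (E : Set ℤ) :
    (weightMeasure (harmonicWeight n)).real E = logWeight E n := by
  rw [measureReal_def, weightMeasure_harmonicWeight, ENNReal.toReal_sum, logWeight, Finset.mul_sum]
  · refine Finset.sum_congr rfl fun k hk => ?_
    have hnonneg : 0 ≤ (Real.log n)⁻¹ * (k : ℝ)⁻¹ := by positivity
    by_cases hkE : (k : ℤ) ∈ E <;>
      simp [hkE, harmonicWeight_of_mem (Finset.mem_Icc.mp hk), ENNReal.toReal_ofReal hnonneg]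
  · intro k hk
    by_cases hkE : (k : ℤ) ∈ E <;> simp [hkE, harmonicWeight_of_mem (Finset.mem_Icc.mp hk)]

lemma antitoneOn_harmonicWeight (n : ℕ) : AntitoneOn (harmonicWeight n) (Set.Ici 1) := by
  intro j hj k _ hjk
  by_cases hk : k ∈ Set.Icc 1 n
  · rw [harmonicWeight_of_mem hk, harmonicWeight_of_mem ⟨hj, hjk.trans hk.2⟩]
    have : (0 : ℝ) < j := Nat.cast_pos.mpr hj
    gcongr
  · rw [harmonicWeight_of_notMem hk]
    exact zero_le

lemma tendsto_inv_log_natCast : Tendsto (fun n : ℕ => (Real.log n)⁻¹) atTop (𝓝 0) :=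
  tendsto_inv_atTop_zero.comp (Real.tendsto_log_atTop.comp tendsto_natCast_atTop_atTop)

lemma tendsto_logWeight_univ : Tendsto (logWeight Set.univ) atTop (𝓝 1) := by
  have h := (tendsto_inv_log_natCast.mul Real.tendsto_harmonic_sub_log).add_const 1
  rw [zero_mul, zero_add] at h
  refine h.congr' ?_
  filter_upwards [eventually_gt_atTop 1] with n hn
  have hlog : Real.log n ≠ 0 := (Real.log_pos (Nat.one_lt_cast.mpr hn)).ne'
  rw [logWeight, mul_sub, inv_mul_cancel₀ hlog, sub_add_cancel, harmonic_eq_sum_Icc]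
  simp

lemma exists_isInvariantMean_tendsto_logWeight (U : Ultrafilter ℕ) (hU : (U : Filter ℕ) ≤ atTop) :
    ∃ m, IsInvariantMean m ∧ ∀ E, Tendsto (logWeight E) U (𝓝 (m E)) := by
  have hone : Tendsto (fun n => (harmonicWeight n 1).toReal) atTop (𝓝 0) := by
    refine tendsto_inv_log_natCast.congr' ?_
    filter_upwards [eventually_ge_atTop 1] with n hn
    simp [harmonicWeight_of_mem (show 1 ∈ Set.Icc 1 n from ⟨le_rfl, hn⟩), Real.log_natCast_nonneg]
  obtain ⟨m, hm, hlim⟩ := exists_isInvariantMean_tendsto_weightMeasure U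
    (fun n => harmonicWeight_of_notMem (by simp)) (.of_forall antitoneOn_harmonicWeight)
    (by simpa only [weightMeasure_harmonicWeight_real] using tendsto_logWeight_univ.mono_left hU)
    (hone.mono_left hU)
  exact ⟨m, hm, by simpa only [weightMeasure_harmonicWeight_real] using hlim⟩

lemma hasLogDensity_of_periodic {m : Set ℤ → ℝ} (hm : IsInvariantMean m) {E : Set ℤ} {q : ℕ}
    [NeZero q] (hE : Function.Periodic (· ∈ E) (q : ℤ)) : HasLogDensity E (m E) := by
  refine (tendsto_iff_ultrafilter _ _ _).mpr fun U hU => ?_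
  obtain ⟨m', hm', hlim⟩ := exists_isInvariantMean_tendsto_logWeight U hU
  exact hm.eq_of_periodic hm' hE ▸ hlim E

end LogWeight

section Convolution

open ArithmeticFunction ArithmeticFunction.zeta

lemma mul_prodPrimeFactors_eq_zeta {R : Type*} [CommSemiring R] {f : ArithmeticFunction R}
    (hone : f 1 = 1) (hmul : ∀ k n, f (k * n) = f k * f n) {g : ℕ → R}
    (hg : ∀ p, p.Prime → f p + g p = 1) : f * prodPrimeFactors g = ↑ζ := by
  have hf : f.IsMultiplicative := ⟨hone, fun {k n} _ => hmul k n⟩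
  refine ((hf.mul (.prodPrimeFactors g)).eq_iff_eq_on_prime_powers _ _
    isMultiplicative_zeta.natCast).2 fun p e hp => ?_
  have hpow (i : ℕ) : f (p ^ i) = f p ^ i := by
    induction i with
    | zero => simp [hone]
    | succ i ih => rw [pow_succ, hmul, ih, pow_succ]
  have hcofactor : ∀ i ∈ Finset.range e, prodPrimeFactors g (p ^ (e - i)) = g p := fun i hi => by
    have : e - i ≠ 0 := by grind
    rw [prodPrimeFactors_apply (pow_ne_zero _ hp.ne_zero), Nat.primeFactors_prime_pow this hp,
      Finset.prod_singleton]
  have hgeom : ∑ i ∈ Finset.range e, f p ^ i * g p + f p ^ e = 1 := by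
    clear hcofactor
    induction e with
    | zero => simp
    | succ e ih => rw [Finset.sum_range_succ, add_assoc, pow_succ, ← mul_add, add_comm (g p),
        hg p hp, mul_one, ih]
  have hζ : (ζ : ArithmeticFunction R) (p ^ e) = 1 := by simp [hp.ne_zero]
  rw [hζ, mul_apply, Nat.sum_divisorsAntidiagonal fun i j => f i * prodPrimeFactors g j,
    Nat.sum_divisors_prime_pow hp, Finset.sum_range_succ, Nat.div_self (pow_pos hp.pos e), hpow,
    (IsMultiplicative.prodPrimeFactors g).map_one, mul_one, ← hgeom]
  congr 1
  refine Finset.sum_congr rfl fun i hi => ?_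
  rw [hpow, Nat.pow_div (Finset.mem_range.mp hi).le hp.pos, hcofactor i hi]

lemma tsum_sum_divisorsAntidiagonal {F : ℕ × ℕ → ℝ≥0∞} (hF : ∀ x, x.1 * x.2 = 0 → F x = 0) :
    ∑' n : ℕ, ∑ x ∈ n.divisorsAntidiagonal, F x = ∑' x, F x := by
  rw [← ENNReal.tsum_fiberwise F fun x => x.1 * x.2]
  refine tsum_congr fun n => ?_
  rcases eq_or_ne n 0 with rfl | hn
  · rw [Nat.divisorsAntidiagonal_zero, Finset.sum_empty, eq_comm, ENNReal.tsum_eq_zero]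
    exact fun x => hF x x.2
  · rw [← Finset.tsum_subtype']
    refine congrArg (fun s : Set (ℕ × ℕ) => ∑' x : s, F x) ?_
    ext x
    simp [hn]

lemma weightMeasure_mul (u h : ArithmeticFunction ℝ≥0∞) (E : Set ℤ) : weightMeasure ⇑(u * h) E =
    ∑' k, ∑' r, ((↑) ⁻¹' E : Set ℕ).indicator 1 (k * r) * (u k * h r) := by
  rw [weightMeasure_apply, ← ENNReal.tsum_prod,
    ← tsum_sum_divisorsAntidiagonal (by simp +contextual [mul_eq_zero, or_imp])]
  refine tsum_congr fun n => ?_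
  have : ((↑) ⁻¹' E : Set ℕ).indicator (u * h) n =
      ((↑) ⁻¹' E : Set ℕ).indicator 1 n * (u * h) n := by
    by_cases hn : (n : ℤ) ∈ E <;> simp [hn]
  rw [this, mul_apply, Finset.mul_sum]
  refine Finset.sum_congr rfl fun x hx => ?_
  rw [(Nat.mem_divisorsAntidiagonal.mp hx).1]

lemma weightMeasure_mul_univ (u h : ArithmeticFunction ℝ≥0∞) :
    weightMeasure ⇑(u * h) Set.univ = weightMeasure u Set.univ * ∑' r, h r := by
  rw [weightMeasure_mul]
  simp [weightMeasure_univ, ENNReal.tsum_mul_left, ENNReal.tsum_mul_right]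

lemma weightMeasure_mul_tsum_le (u h : ArithmeticFunction ℝ≥0∞) {E : Set ℤ}
    (hE : ∀ k ∈ E, ∀ r, k * r ∈ E) :
    weightMeasure u E * ∑' r, h r ≤ weightMeasure ⇑(u * h) E := by
  rw [weightMeasure_mul, weightMeasure_apply, ← ENNReal.tsum_mul_right]
  refine ENNReal.tsum_le_tsum fun k => ?_
  rw [← ENNReal.tsum_mul_left]
  refine ENNReal.tsum_le_tsum fun r => ?_
  by_cases hk : (k : ℤ) ∈ E
  · simp [hk, hE k hk r]
  · simp [hk]

end Convolution

section Zeta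

open ArithmeticFunction ArithmeticFunction.zeta

/-- The Dirichlet coefficients `n ^ (-s)`, `n ≥ 1`, of `ζ(s)`, as an arithmetic function so that
products of Dirichlet series are convolutions. -/
def zetaCoeff (s : ℝ) : ArithmeticFunction ℝ≥0∞ where
  toFun n := if n = 0 then 0 else ENNReal.ofReal ((n : ℝ) ^ (-s))
  map_zero' := if_pos rfl

lemma zetaCoeff_apply {n : ℕ} (hn : n ≠ 0) (s : ℝ) :
    zetaCoeff s n = ENNReal.ofReal ((n : ℝ) ^ (-s)) :=
  if_neg hn

lemma zetaCoeff_one (s : ℝ) : zetaCoeff s 1 = 1 := by simp [zetaCoeff_apply]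

lemma zetaCoeff_mul (s : ℝ) (k n : ℕ) : zetaCoeff s (k * n) = zetaCoeff s k * zetaCoeff s n := by
  rcases eq_or_ne k 0 with rfl | hk
  · simp
  rcases eq_or_ne n 0 with rfl | hn
  · simp
  rw [zetaCoeff_apply hk, zetaCoeff_apply hn, zetaCoeff_apply (mul_ne_zero hk hn),
    ← ENNReal.ofReal_mul (by positivity), Nat.cast_mul,
    Real.mul_rpow (by positivity) (by positivity)]

lemma zetaCoeff_add (s t : ℝ) (n : ℕ) : zetaCoeff (s + t) n = zetaCoeff s n * zetaCoeff t n := by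
  rcases eq_or_ne n 0 with rfl | hn
  · simp
  have : (0 : ℝ) < n := by positivity
  rw [zetaCoeff_apply hn, zetaCoeff_apply hn, zetaCoeff_apply hn,
    ← ENNReal.ofReal_mul (by positivity), neg_add, Real.rpow_add this]

lemma antitoneOn_zetaCoeff {s : ℝ} (hs : 0 ≤ s) : AntitoneOn (zetaCoeff s) (Set.Ici 1) := by
  intro k hk n _ hkn
  have hk : 0 < k := hk
  rw [zetaCoeff_apply hk.ne', zetaCoeff_apply (hk.trans_le hkn).ne']
  exact ENNReal.ofReal_le_ofReal (Real.rpow_le_rpow_of_nonpos (by positivity)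
    (Nat.cast_le.mpr hkn) (neg_nonpos.mpr hs))

-- As a Dirichlet series, `b` is `ζ(s) / ζ(s + t) = ∏ₚ (1 - p⁻ˢ⁻ᵗ) / (1 - p⁻ˢ)`.
lemma exists_zetaCoeff_add_mul_eq (s : ℝ) {t : ℝ} (ht : 0 ≤ t) :
    ∃ b : ArithmeticFunction ℝ≥0∞, zetaCoeff (s + t) * b = zetaCoeff s := by
  have prime_le {p : ℕ} (hp : p.Prime) : zetaCoeff t p ≤ 1 := by
    rw [← zetaCoeff_one t]
    exact antitoneOn_zetaCoeff ht Set.self_mem_Ici hp.one_le hp.one_le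
  have hconv := mul_prodPrimeFactors_eq_zeta (zetaCoeff_one t) (zetaCoeff_mul t)
    fun p hp => add_tsub_cancel_of_le (prime_le hp)
  refine ⟨(zetaCoeff s).pmul (prodPrimeFactors fun p => 1 - zetaCoeff t p), ?_⟩
  ext n
  calc (zetaCoeff (s + t) * _) n
    _ = ∑ x ∈ n.divisorsAntidiagonal, zetaCoeff s n *
          (zetaCoeff t x.1 * prodPrimeFactors (fun p => 1 - zetaCoeff t p) x.2) := by
      rw [mul_apply]
      refine Finset.sum_congr rfl fun x hx => ?_
      rw [← (Nat.mem_divisorsAntidiagonal.mp hx).1, zetaCoeff_mul, zetaCoeff_add, pmul_apply]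
      ring
    _ = zetaCoeff s n * (ζ : ArithmeticFunction ℝ≥0∞) n := by
      rw [← Finset.mul_sum, ← mul_apply, hconv]
    _ = zetaCoeff s n := by
      rcases eq_or_ne n 0 with rfl | hn
      · simp
      · simp [hn]

lemma tsum_zetaCoeff {s : ℝ} (hs : 1 < s) :
    ∑' n, zetaCoeff s n = ENNReal.ofReal (∑' n : ℕ, 1 / (n : ℝ) ^ s) := by
  rw [ENNReal.ofReal_tsum_of_nonneg (fun n => by positivity)
    (Real.summable_one_div_nat_rpow.mpr hs)]
  refine tsum_congr fun n => ?_
  rcases eq_or_ne n 0 with rfl | hn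
  · simp [Real.zero_rpow (zero_lt_one.trans hs).ne']
  · rw [zetaCoeff_apply hn, Real.rpow_neg (by positivity), one_div]

lemma tsum_zetaCoeff_ne_zero (s : ℝ) : ∑' n, zetaCoeff s n ≠ 0 := fun h => by
  simpa [zetaCoeff_one] using ENNReal.tsum_eq_zero.mp h 1

lemma tendsto_tsum_zetaCoeff : Tendsto (fun s => ∑' n, zetaCoeff s n) (𝓝[>] 1) (𝓝 ∞) := by
  have hsub : Tendsto (fun s : ℝ => s - 1) (𝓝[>] 1) (𝓝[>] 0) := by
    refine tendsto_nhdsWithin_iff.mpr ⟨?_, ?_⟩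
    · simpa using ((continuous_sub_right (1 : ℝ)).tendsto 1).mono_left nhdsWithin_le_nhds
    · filter_upwards [self_mem_nhdsWithin] with s (hs : 1 < s) using sub_pos.mpr hs
  have hzeta := (tendsto_inv_nhdsGT_zero.comp hsub).atTop_mul_pos one_pos
    tendsto_sub_mul_tsum_nat_rpow
  refine (ENNReal.tendsto_ofReal_nhds_top.mpr hzeta).congr' ?_
  filter_upwards [self_mem_nhdsWithin] with s (hs : 1 < s)
  rw [tsum_zetaCoeff hs, Function.comp_apply, inv_mul_cancel_left₀ (sub_pos.mpr hs).ne']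

/-- The probability weights `n ^ (-s) / ζ(s)`, `n ≥ 1`, whose limit as `s → 1⁺` is a mean with the
Davenport–Erdős property; all weights are `0` if `s ≤ 1`, where `ζ(s)` is infinite. -/
def zetaWeight (s : ℝ) (n : ℕ) : ℝ≥0∞ := (∑' k, zetaCoeff s k)⁻¹ * zetaCoeff s n

lemma antitoneOn_zetaWeight {s : ℝ} (hs : 0 ≤ s) : AntitoneOn (zetaWeight s) (Set.Ici 1) :=
  fun _ hk _ hn hkn => mul_le_mul_right (antitoneOn_zetaCoeff hs hk hn hkn) _

lemma weightMeasure_zetaWeight (s : ℝ) (E : Set ℤ) : weightMeasure (zetaWeight s) E =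
    (∑' k, zetaCoeff s k)⁻¹ * weightMeasure (zetaCoeff s) E := by
  rw [weightMeasure_apply, weightMeasure_apply, ← ENNReal.tsum_mul_left]
  refine tsum_congr fun k => ?_
  by_cases hk : (k : ℤ) ∈ E <;> simp [hk, zetaWeight]

lemma weightMeasure_zetaWeight_univ {s : ℝ} (hs : 1 < s) :
    weightMeasure (zetaWeight s) Set.univ = 1 := by
  rw [weightMeasure_zetaWeight, weightMeasure_univ]
  exact ENNReal.inv_mul_cancel (tsum_zetaCoeff_ne_zero s) (by simp [tsum_zetaCoeff hs])

instance (s : ℝ) : IsFiniteMeasure (weightMeasure (zetaWeight s)) := by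
  refine ⟨?_⟩
  rw [weightMeasure_zetaWeight, weightMeasure_univ]
  exact (ENNReal.inv_mul_le_one _).trans_lt ENNReal.one_lt_top

lemma weightMeasure_zetaWeight_antitoneOn {E : Set ℤ} (hE : ∀ k ∈ E, ∀ r, k * r ∈ E) :
    AntitoneOn (fun s => weightMeasure (zetaWeight s) E) (Set.Ioi 1) := by
  intro s hs s' _ hss'
  obtain ⟨b, hb⟩ := exists_zetaCoeff_add_mul_eq s (sub_nonneg.mpr hss')
  rw [add_sub_cancel] at hb
  have hzeta : ∑' k, zetaCoeff s k = (∑' k, zetaCoeff s' k) * ∑' r, b r := by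
    rw [← weightMeasure_univ, ← weightMeasure_univ, ← weightMeasure_mul_univ, hb]
  have hb_ne_zero : ∑' r, b r ≠ 0 :=
    right_ne_zero_of_mul (hzeta ▸ tsum_zetaCoeff_ne_zero s)
  have hb_ne_top : ∑' r, b r ≠ ∞ := fun h => by
    simp [h, tsum_zetaCoeff hs, ENNReal.mul_top (tsum_zetaCoeff_ne_zero s')] at hzeta
  calc weightMeasure (zetaWeight s') E
    _ = (∑' k, zetaCoeff s k)⁻¹ * (weightMeasure (zetaCoeff s') E * ∑' r, b r) := by
      rw [weightMeasure_zetaWeight, hzeta, ENNReal.mul_inv (.inr hb_ne_top) (.inr hb_ne_zero),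
        mul_comm _ (∑' r, b r), mul_assoc, ENNReal.inv_mul_cancel_left hb_ne_zero hb_ne_top]
    _ ≤ (∑' k, zetaCoeff s k)⁻¹ * weightMeasure (zetaCoeff s) E := by
      gcongr
      exact (weightMeasure_mul_tsum_le _ b hE).trans_eq (by rw [hb])
    _ = weightMeasure (zetaWeight s) E := (weightMeasure_zetaWeight s E).symm

end Zeta

section DavenportErdos

lemma multiplesZ_mono {C D : Set ℕ} (h : C ⊆ D) : multiplesZ C ⊆ multiplesZ D :=
  fun _ ⟨c, hc, hcx⟩ => ⟨c, h hc, hcx⟩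

lemma multiplesZ_iUnion {ι : Sort*} (C : ι → Set ℕ) :
    multiplesZ (⋃ i, C i) = ⋃ i, multiplesZ (C i) := by
  ext x
  simp only [multiplesZ, Set.mem_iUnion, Set.mem_ofPred_eq]
  grind

lemma multiplesZ_union (C D : Set ℕ) : multiplesZ (C ∪ D) = multiplesZ C ∪ multiplesZ D := by
  ext x
  simp only [multiplesZ, Set.mem_union, Set.mem_ofPred_eq]
  grind

lemma exists_finset_measure_multiplesZ_lt (ν : Measure ℤ) [IsFiniteMeasure ν] (C : Set ℕ) {ε : ℝ}
    (hε : 0 < ε) :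
    ∃ A : Finset ℕ, ↑A ⊆ C ∧ ν.real (multiplesZ C) < ν.real (multiplesZ A) + ε := by
  have hdir : Directed (· ⊆ ·) fun A : {A : Finset ℕ // ↑A ⊆ C} => multiplesZ (A : Set ℕ) :=
    fun A A' => ⟨⟨A ∪ A', by simp [A.2, A'.2]⟩, multiplesZ_mono (by simp),
      multiplesZ_mono (by simp)⟩
  have hC : C = ⋃ A : {A : Finset ℕ // ↑A ⊆ C}, (A : Set ℕ) := by
    refine Set.Subset.antisymm (fun c hc => ?_) (Set.iUnion_subset fun A => A.2)
    exact Set.mem_iUnion.mpr ⟨⟨{c}, by simpa using hc⟩, by simp⟩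
  by_contra! h
  have hle : ν (multiplesZ C) ≤ ENNReal.ofReal (ν.real (multiplesZ C) - ε) := by
    conv_lhs => rw [hC, multiplesZ_iUnion, hdir.measure_iUnion]
    refine iSup_le fun A => ?_
    rw [← ofReal_measureReal]
    exact ENNReal.ofReal_le_ofReal (le_sub_iff_add_le.mpr (h A A.2))
  have hnonneg : 0 ≤ ν.real (multiplesZ C) - ε :=
    measureReal_nonneg.trans (le_sub_iff_add_le.mpr (h ∅ (by simp)))
  have := ENNReal.toReal_le_of_le_ofReal hnonneg hle
  rw [← measureReal_def] at this
  linarith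

/-- The property of a mean expressed by the Davenport–Erdős theorem for the logarithmic density:
finite subsets of `C` exhaust the mean of the set of multiples of `C`. -/
def DavenportErdos (m : Set ℤ → ℝ) : Prop :=
  ∀ C : Set ℕ, ∀ ε > 0, ∃ A : Finset ℕ, ↑A ⊆ C ∧ m (multiplesZ C) < m (multiplesZ A) + ε

lemma exists_isInvariantMean_tendsto_zetaWeight (U : Ultrafilter ℝ) (hU : ↑U ≤ 𝓝[>] (1 : ℝ)) :
    ∃ m, IsInvariantMean m ∧
      ∀ E, Tendsto (fun s => (weightMeasure (zetaWeight s)).real E) U (𝓝 (m E)) := by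
  have hgt : ∀ᶠ s in (U : Filter ℝ), 1 < s := hU self_mem_nhdsWithin
  refine exists_isInvariantMean_tendsto_weightMeasure U (by simp [zetaWeight]) ?_ ?_ ?_
  · exact hgt.mono fun s hs => antitoneOn_zetaWeight (zero_le_one.trans hs.le)
  · refine tendsto_const_nhds.congr' (hgt.mono fun s hs => ?_)
    simp [measureReal_def, weightMeasure_zetaWeight_univ hs]
  · simp only [zetaWeight, zetaCoeff_one, mul_one]
    rw [← ENNReal.toReal_zero, ← ENNReal.inv_top]
    exact (ENNReal.tendsto_toReal (by simp)).comp (tendsto_tsum_zetaCoeff.inv.mono_left hU)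

lemma exists_isInvariantMean_davenportErdos : ∃ m, IsInvariantMean m ∧ DavenportErdos m := by
  set ν : ℝ → Set ℤ → ℝ := fun s => (weightMeasure (zetaWeight s)).real
  let U := Ultrafilter.of (𝓝[>] (1 : ℝ))
  have hU : ↑U ≤ 𝓝[>] (1 : ℝ) := Ultrafilter.of_le _
  obtain ⟨m, hm, hlim⟩ := exists_isInvariantMean_tendsto_zetaWeight U hU
  have hgt : ∀ᶠ s in (U : Filter ℝ), 1 < s := hU self_mem_nhdsWithin
  refine ⟨m, hm, fun C ε hε => ?_⟩
  obtain ⟨s, hsC, hs⟩ : ∃ s, m (multiplesZ C) - ε / 2 < ν s (multiplesZ C) ∧ 1 < s :=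
    (((hlim _).eventually_const_lt (sub_lt_self _ (half_pos hε))).and hgt).exists
  obtain ⟨A, hAC, hA⟩ := exists_finset_measure_multiplesZ_lt (weightMeasure (zetaWeight s)) C
    (half_pos hε)
  have hmul : ∀ k ∈ multiplesZ A, ∀ r, k * r ∈ multiplesZ A :=
    fun k ⟨c, hc, hck⟩ r => ⟨c, hc, hck.mul_right r⟩
  have hsA : ν s (multiplesZ A) ≤ m (multiplesZ A) := by
    refine ge_of_tendsto (hlim _) ?_
    filter_upwards [hgt, hU (Ioo_mem_nhdsGT hs)] with t ht hts
    exact ENNReal.toReal_mono (measure_ne_top _ _)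
      (weightMeasure_zetaWeight_antitoneOn hmul ht hs hts.2.le)
  exact ⟨A, hAC, by linarith⟩

end DavenportErdos

section Tautness

variable {m : Set ℤ → ℝ} {B C : Set ℕ} {d : ℕ}

lemma Btilde_anti (C : Set ℕ) : Antitone (Btilde C) :=
  fun _ _ h _ hc => ⟨hc.1, fun p hp hpc => h.trans_lt (hc.2 p hp hpc)⟩

lemma coprime_of_mem_Btilde {N c : ℕ} (hd : d ∈ Nat.smoothNumbers (N + 1))
    (hc : c ∈ Btilde C N) : d.Coprime c :=
  Nat.coprime_of_dvd fun p hp hpd hpc =>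
    (hc.2 p hp hpc).not_ge (Nat.lt_succ_iff.mp (Nat.mem_smoothNumbers'.mp hd p hp hpd))

lemma periodic_compl_multiplesZ (A : Finset ℕ) :
    Function.Periodic (· ∈ (multiplesZ A)ᶜ) ((∏ a ∈ A, a : ℕ) : ℤ) :=
  fun x => congrArg Not (periodic_multiplesZ A x)

lemma neZero_prod {A : Finset ℕ} (hA : 0 ∉ A) : NeZero (∏ a ∈ A, a) :=
  ⟨Finset.prod_ne_zero_iff.mpr fun _ ha => ne_of_mem_of_not_mem ha hA⟩

lemma IsInvariantMean.compl_multiplesZ_inter (hm : IsInvariantMean m) {A A' : Finset ℕ}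
    (hA : 0 ∉ A) (hA' : 0 ∉ A') (hcop : ∀ a ∈ A, ∀ a' ∈ A', a.Coprime a') :
    m ((multiplesZ A)ᶜ ∩ (multiplesZ A')ᶜ) = m (multiplesZ A)ᶜ * m (multiplesZ A')ᶜ := by
  have := neZero_prod hA
  have := neZero_prod hA'
  exact hm.inter_of_coprime
    (Nat.Coprime.prod_left fun a ha => Nat.Coprime.prod_right (hcop a ha))
    (periodic_compl_multiplesZ A) (periodic_compl_multiplesZ A')

lemma exists_finset_compl_multiplesZ_le_mul (hm : IsInvariantMean m) (hDE : DavenportErdos m)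
    (hC : 0 ∉ C) {ε : ℝ} (hε : 0 < ε) (hlarge : ∀ N, ε ≤ m (multiplesZ (Btilde C N)))
    {N : ℕ} {A : Finset ℕ} (hA : ↑A ⊆ Btilde C N) :
    ∃ A' : Finset ℕ, ↑A' ⊆ Btilde C N ∧
      m (multiplesZ A')ᶜ ≤ m (multiplesZ A)ᶜ * (1 - ε / 2) := by
  have hA0 : 0 ∉ A := fun h => hC (hA h).1
  set N' := max N (A.sup id)
  obtain ⟨D, hDN, hD⟩ := hDE (Btilde C N') (ε / 2) (half_pos hε)
  have hD0 : 0 ∉ D := fun h => hC (hDN h).1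
  have hcop : ∀ a ∈ A, ∀ a' ∈ D, a.Coprime a' := fun a ha a' ha' =>
    coprime_of_mem_Btilde (Nat.mem_smoothNumbers_of_lt (ne_of_mem_of_not_mem ha hA0).bot_lt
      (Nat.lt_succ_of_le ((Finset.le_sup (f := id) ha).trans (le_max_right _ _)))) (hDN ha')
  refine ⟨A ∪ D, ?_, ?_⟩
  · rw [Finset.coe_union]
    exact Set.union_subset hA (hDN.trans (Btilde_anti C (le_max_left _ _)))
  · rw [Finset.coe_union, multiplesZ_union, Set.compl_union,
      hm.compl_multiplesZ_inter hA0 hD0 hcop]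
    refine mul_le_mul_of_nonneg_left ?_ (hm.nonneg _)
    rw [hm.compl]
    linarith [hlarge N']

-- A zero–one law: the multiples of the rough parts of `C` either have means tending to `0`, or
-- each of them has mean `1`.
lemma exists_finset_compl_multiplesZ_lt (hm : IsInvariantMean m) (hDE : DavenportErdos m)
    (hC : 0 ∉ C) {ε : ℝ} (hε : 0 < ε) (hlarge : ∀ N, ε ≤ m (multiplesZ (Btilde C N)))
    (N : ℕ) {δ : ℝ} (hδ : 0 < δ) :
    ∃ A : Finset ℕ, ↑A ⊆ Btilde C N ∧ m (multiplesZ A)ᶜ < δ := by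
  have hε1 : ε ≤ 1 := (hlarge N).trans (hm.univ ▸ hm.mono (Set.subset_univ _))
  have pow_bound (j : ℕ) :
      ∃ A : Finset ℕ, ↑A ⊆ Btilde C N ∧ m (multiplesZ A)ᶜ ≤ (1 - ε / 2) ^ j := by
    induction j with
    | zero => exact ⟨∅, by simp, by simpa [hm.compl] using hm.nonneg _⟩
    | succ j ih =>
      obtain ⟨A, hAN, hA⟩ := ih
      obtain ⟨A', hA'N, hA'⟩ := exists_finset_compl_multiplesZ_le_mul hm hDE hC hε hlarge hAN
      exact ⟨A', hA'N, hA'.trans (mul_le_mul_of_nonneg_right hA (by linarith))⟩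
  obtain ⟨j, hj⟩ := exists_pow_lt_of_lt_one hδ (show 1 - ε / 2 < 1 by linarith)
  obtain ⟨A, hAN, hA⟩ := pow_bound j
  exact ⟨A, hAN, hA.trans_lt hj⟩

/-- The nontrivial cofactors of `d` in `B`, the possible rough parts of those elements of `B` whose
smooth part is `d`. -/
def properCofactors (B : Set ℕ) (d : ℕ) : Set ℕ := {c | c ≠ 1 ∧ d * c ∈ B}

lemma zero_notMem_properCofactors (hB0 : 0 ∉ B) : 0 ∉ properCofactors B d :=
  fun h => hB0 (by simpa using h.2)

-- If `d * c₀ ∣ x`, then either `x` is free of `A`, or some `a ∈ A` divides `x`, and then so does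
-- the element `d * a ≠ d * c₀` of `B`.
lemma multiplesZ_subset_of_cofactors {c₀ : ℕ} {A : Set ℕ} (hd : d ≠ 0)
    (hA : A ⊆ properCofactors B d) (hcop : ∀ a ∈ A, d.Coprime a) (hc₀ : c₀ ∉ A) :
    multiplesZ B ⊆ (multiplesZ A)ᶜ ∪ multiplesZ (B \ {d * c₀}) := by
  rintro x ⟨b, hb, hbx⟩
  by_cases hbc : b = d * c₀
  · refine or_iff_not_imp_left.mpr fun hx => ?_
    obtain ⟨a, ha, hax⟩ := not_not.mp hx
    refine ⟨d * a, ⟨(hA ha).2, fun h => hc₀ ?_⟩, ?_⟩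
    · rwa [← mul_left_cancel₀ hd h]
    · have hdx : (d : ℤ) ∣ x := (Int.natCast_dvd_natCast.mpr ⟨c₀, hbc⟩).trans hbx
      exact_mod_cast (Nat.isCoprime_iff_coprime.mpr (hcop a ha)).mul_dvd hdx hax
  · exact .inr ⟨b, ⟨hb, hbc⟩, hbx⟩

lemma logWeight_mono {E F : Set ℤ} (h : E ⊆ F) (n : ℕ) : logWeight E n ≤ logWeight F n := by
  simp only [← weightMeasure_harmonicWeight_real]
  exact measureReal_mono h

lemma logWeight_union_le (E F : Set ℤ) (n : ℕ) :
    logWeight (E ∪ F) n ≤ logWeight E n + logWeight F n := by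
  simp only [← weightMeasure_harmonicWeight_real]
  exact measureReal_union_le E F

lemma isBoundedUnder_ge_logWeight (E : Set ℤ) : IsBoundedUnder (· ≥ ·) atTop (logWeight E) :=
  isBoundedUnder_of ⟨0, fun n => by
    rw [← weightMeasure_harmonicWeight_real]
    exact measureReal_nonneg⟩

lemma isBoundedUnder_le_logWeight (E : Set ℤ) : IsBoundedUnder (· ≤ ·) atTop (logWeight E) :=
  tendsto_logWeight_univ.isBoundedUnder_le.mono_le
    (Eventually.of_forall (logWeight_mono (Set.subset_univ E)))

lemma logDensLow_le_add_of_subset_union {E F G : Set ℤ} {δ : ℝ} (hF : HasLogDensity F δ)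
    (h : E ⊆ F ∪ G) : logDensLow E ≤ δ + logDensLow G := by
  have hG := (isBoundedUnder_le_logWeight G).isCoboundedUnder_ge
  calc logDensLow E
      ≤ liminf (logWeight F + logWeight G) atTop := by
        refine liminf_le_liminf (Eventually.of_forall fun n => ?_)
          (isBoundedUnder_ge_logWeight E) ?_
        · exact (logWeight_mono h n).trans (logWeight_union_le F G n)
        · exact (isBoundedUnder_le_add (isBoundedUnder_le_logWeight F)
            (isBoundedUnder_le_logWeight G)).isCoboundedUnder_ge
    _ ≤ limsup (logWeight F) atTop + liminf (logWeight G) atTop :=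
        liminf_add_le (isBoundedUnder_ge_logWeight F) (isBoundedUnder_le_logWeight F)
          (isBoundedUnder_ge_logWeight G) hG
    _ = δ + logDensLow G := by rw [hF.limsup_eq, logDensLow]

lemma IsTaut.exists_multiplesZ_Btilde_properCofactors_lt (htaut : IsTaut B) (hB0 : 0 ∉ B)
    (hm : IsInvariantMean m) (hDE : DavenportErdos m) (d : ℕ) {ε : ℝ} (hε : 0 < ε) :
    ∃ N, m (multiplesZ (Btilde (properCofactors B d) N)) < ε := by
  by_contra! hlarge
  obtain ⟨c₀, hc₀⟩ : (properCofactors B d).Nonempty := by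
    by_contra! hempty
    have := hlarge 0
    simp [Btilde, multiplesZ, hempty, hm.empty, hε.not_ge] at this
  have hd : d ≠ 0 := by
    rintro rfl
    exact hB0 (by simpa using hc₀.2)
  obtain ⟨A, hAN, hA⟩ := exists_finset_compl_multiplesZ_lt hm hDE
    (zero_notMem_properCofactors hB0) hε hlarge (max d c₀) (sub_pos.mpr (htaut _ hc₀.2))
  have hcop : ∀ a ∈ (A : Set ℕ), d.Coprime a := fun a ha =>
    coprime_of_mem_Btilde
      (Nat.mem_smoothNumbers_of_lt hd.bot_lt (Nat.lt_succ_of_le (le_max_left _ _))) (hAN ha)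
  have hc₀A : c₀ ∉ (A : Set ℕ) := fun h => by
    have hc₀0 : c₀ ≠ 0 := ne_of_mem_of_not_mem hc₀ (zero_notMem_properCofactors hB0)
    have hc₀N := Nat.mem_smoothNumbers_of_lt hc₀0.bot_lt (Nat.lt_succ_of_le (le_max_right d c₀))
    exact hc₀.1 ((Nat.coprime_self c₀).mp (coprime_of_mem_Btilde hc₀N (hAN h)))
  have := neZero_prod fun h => zero_notMem_properCofactors hB0 (hAN h).1
  have hdens : HasLogDensity (multiplesZ A)ᶜ (m (multiplesZ A)ᶜ) :=
    hasLogDensity_of_periodic hm (periodic_compl_multiplesZ A)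
  have := logDensLow_le_add_of_subset_union hdens
    (multiplesZ_subset_of_cofactors hd (fun a ha => (hAN ha).1) hcop hc₀A)
  linarith

lemma IsTaut.tendsto_multiplesZ_Btilde_properCofactors (htaut : IsTaut B) (hB0 : 0 ∉ B)
    (hm : IsInvariantMean m) (hDE : DavenportErdos m) (d : ℕ) :
    Tendsto (fun N => m (multiplesZ (Btilde (properCofactors B d) N))) atTop (𝓝 0) := by
  refine tendsto_order.mpr ⟨fun a ha => Eventually.of_forall fun N => ha.trans_le (hm.nonneg _),
    fun ε hε => ?_⟩
  obtain ⟨N, hN⟩ := htaut.exists_multiplesZ_Btilde_properCofactors_lt hB0 hm hDE d hε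
  filter_upwards [eventually_ge_atTop N] with n hn
  exact (hm.mono (multiplesZ_mono (Btilde_anti _ hn))).trans_lt hN

lemma IsTaut.tendsto_multiplesZ_Btilde_biUnion_properCofactors (htaut : IsTaut B) (hB0 : 0 ∉ B)
    (hm : IsInvariantMean m) (hDE : DavenportErdos m) (S : Finset ℕ) :
    Tendsto (fun N => m (multiplesZ (Btilde (⋃ d ∈ S, properCofactors B d) N))) atTop (𝓝 0) := by
  have hsum : Tendsto (fun N => ∑ d ∈ S, m (multiplesZ (Btilde (properCofactors B d) N)))
      atTop (𝓝 0) := by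
    simpa using tendsto_finsetSum S fun d _ =>
      htaut.tendsto_multiplesZ_Btilde_properCofactors hB0 hm hDE d
  refine squeeze_zero (fun N => hm.nonneg _) (fun N => ?_) hsum
  refine (hm.mono ?_).trans (hm.biUnion_le S _)
  rintro x ⟨c, ⟨hc, hcN⟩, hcx⟩
  obtain ⟨d, hdS, hcd⟩ := Set.mem_iUnion₂.mp hc
  exact Set.mem_iUnion₂.mpr ⟨d, hdS, c, ⟨hcd, hcN⟩, hcx⟩

end Tautness

section FreeTranslates

variable {m : Set ℤ → ℝ} {E : Set ℤ} {C : Set ℕ} {K : Finset ℤ} {Q : ℕ}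

/-- The integers `x` such that the translate `x + K` consists of `C`-free integers. -/
def freeTranslates (C : Set ℕ) (K : Finset ℤ) : Set ℤ := {x | ∀ k ∈ K, x + k ∈ freeZ C}

lemma freeTranslates_union (C D : Set ℕ) (K : Finset ℤ) :
    freeTranslates (C ∪ D) K = freeTranslates C K ∩ freeTranslates D K := by
  ext x
  simp only [freeTranslates, freeZ, multiplesZ_union, Set.compl_union, Set.mem_inter_iff,
    Set.mem_ofPred_eq]
  grind

lemma periodic_freeTranslates (A : Finset ℕ) (K : Finset ℤ) :
    Function.Periodic (· ∈ freeTranslates A K) ((∏ a ∈ A, a : ℕ) : ℤ) := fun x =>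
  propext <| forall₂_congr fun k _ => by
    rw [add_right_comm]
    exact iff_of_eq (periodic_compl_multiplesZ A (x + k))

lemma periodic_inter {F : Set ℤ} {q r : ℕ} (hE : Function.Periodic (· ∈ E) (q : ℤ))
    (hF : Function.Periodic (· ∈ F) (r : ℤ)) :
    Function.Periodic (· ∈ E ∩ F) ((q * r : ℕ) : ℤ) := fun x =>
  congrArg₂ And (by simpa [mul_comm] using hE.int_mul r x) (by simpa using hF.int_mul q x)

namespace IsInvariantMean

lemma inter_preimage_multiplesZ_le (hm : IsInvariantMean m) (hDE : DavenportErdos m) [NeZero Q]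
    (hE : Function.Periodic (· ∈ E) (Q : ℤ)) (hC : 0 ∉ C) (hcop : ∀ c ∈ C, Q.Coprime c) (k : ℤ) :
    m (E ∩ (· + k) ⁻¹' multiplesZ C) ≤ m E * m (multiplesZ C) := by
  refine le_of_forall_pos_le_add fun ε hε => ?_
  obtain ⟨A, hAC, hA⟩ := hDE C ε hε
  have := neZero_prod fun h => hC (hAC h)
  have hF : Function.Periodic (· ∈ (· + k) ⁻¹' multiplesZ A) ((∏ a ∈ A, a : ℕ) : ℤ) := fun x => by
    simpa [add_right_comm] using periodic_multiplesZ A (x + k)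
  have hEA : m (E ∩ (· + k) ⁻¹' multiplesZ A) = m E * m (multiplesZ A) := by
    rw [hm.inter_of_coprime (Nat.Coprime.prod_right fun a ha => hcop a (hAC ha)) hE hF,
      hm.preimage_add]
  have hrest : m ((· + k) ⁻¹' (multiplesZ C \ multiplesZ A)) ≤ ε := by
    rw [hm.preimage_add, hm.diff (multiplesZ_mono hAC)]
    linarith
  calc m (E ∩ (· + k) ⁻¹' multiplesZ C)
      ≤ m (E ∩ (· + k) ⁻¹' multiplesZ A ∪ (· + k) ⁻¹' (multiplesZ C \ multiplesZ A)) :=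
        hm.mono fun x hx => by
          by_cases h : x + k ∈ multiplesZ A
          exacts [.inl ⟨hx.1, h⟩, .inr ⟨hx.2, h⟩]
    _ ≤ m E * m (multiplesZ A) + ε := (hm.union_le _ _).trans (add_le_add hEA.le hrest)
    _ ≤ m E * m (multiplesZ C) + ε := by
        gcongr
        exacts [hm.nonneg E, hm.mono (multiplesZ_mono hAC)]

lemma inter_freeTranslates_pos (hm : IsInvariantMean m) (hDE : DavenportErdos m) [NeZero Q]
    (hE : Function.Periodic (· ∈ E) (Q : ℤ)) (hC : 0 ∉ C) (hcop : ∀ c ∈ C, Q.Coprime c)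
    (hEpos : 0 < m E) (hK : K.card * m (multiplesZ C) < 1) :
    0 < m (E ∩ freeTranslates C K) := by
  have hcover : E ⊆ (E ∩ freeTranslates C K) ∪ ⋃ k ∈ K, E ∩ (· + k) ⁻¹' multiplesZ C := by
    intro x hx
    by_cases hxK : x ∈ freeTranslates C K
    · exact .inl ⟨hx, hxK⟩
    · simp only [freeTranslates, freeZ, Set.mem_ofPred_eq, not_forall, Set.mem_compl_iff,
        not_not] at hxK
      obtain ⟨k, hk, hxk⟩ := hxK
      exact .inr (Set.mem_iUnion₂.mpr ⟨k, hk, hx, hxk⟩)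
  have hbad : m (⋃ k ∈ K, E ∩ (· + k) ⁻¹' multiplesZ C) ≤ K.card * (m E * m (multiplesZ C)) := by
    rw [← nsmul_eq_mul, ← Finset.sum_const]
    exact (hm.biUnion_le K _).trans
      (Finset.sum_le_sum fun k _ => hm.inter_preimage_multiplesZ_le hDE hE hC hcop k)
  nlinarith [(hm.mono hcover).trans (hm.union_le _ _)]

lemma inter_freeTranslates_primes_pos (hm : IsInvariantMean m) (hDE : DavenportErdos m) [NeZero Q]
    (hE : Function.Periodic (· ∈ E) (Q : ℤ)) (hEpos : 0 < m E) {T : Finset ℕ}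
    (hT : ∀ p ∈ T, p.Prime ∧ Q.Coprime p ∧ K.card < p) :
    0 < m (E ∩ freeTranslates T K) := by
  induction T using Finset.induction with
  | empty => simpa [freeTranslates, freeZ, multiplesZ] using hEpos
  | insert p T hpT ih =>
    obtain ⟨⟨hp, hpQ, hpK⟩, hT⟩ := Finset.forall_mem_insert _ _ _ |>.mp hT
    have : NeZero p := ⟨hp.ne_zero⟩
    have := neZero_prod fun h => Nat.not_prime_zero (hT 0 h).1
    have hmean : m (multiplesZ {p}) = (p : ℝ)⁻¹ := by
      simpa [multiplesZ, Int.modEq_zero_iff_dvd] using hm.modEq (q := p) 0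
    have hcop : (Q * ∏ a ∈ T, a).Coprime p := Nat.Coprime.mul_left hpQ <|
      Nat.Coprime.prod_left fun q hq =>
        (Nat.coprime_primes (hT q hq).1 hp).mpr (ne_of_mem_of_not_mem hq hpT)
    rw [Finset.coe_insert, Set.insert_eq, Set.union_comm, freeTranslates_union, ← Set.inter_assoc]
    refine hm.inter_freeTranslates_pos hDE (periodic_inter hE (periodic_freeTranslates T K))
      ?_ ?_ (ih hT) ?_
    · simpa using hp.ne_zero.symm
    · simpa using hcop
    · rw [hmean, mul_inv_lt_iff₀ (by exact_mod_cast hp.pos), one_mul]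
      exact_mod_cast hpK

end IsInvariantMean

lemma freeTranslates_Btilde_subset (C : Set ℕ) (K : Finset ℤ) (M N : ℕ) :
    freeTranslates {p ∈ Finset.Ioc M N | p.Prime} K ∩ freeTranslates (Btilde C N) K ⊆
      freeTranslates (Btilde C M) K := by
  rintro x ⟨hxT, hxN⟩ k hk ⟨c, hc, hcx⟩
  refine hxN k hk ⟨c, ⟨hc.1, fun p hp hpc => ?_⟩, hcx⟩
  by_contra! hpN
  refine hxT k hk ⟨p, ?_, (Int.natCast_dvd_natCast.mpr hpc).trans hcx⟩
  exact ⟨Finset.mem_Ioc.mpr ⟨hc.2 p hp hpc, hpN⟩, hp⟩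

-- The primes in `(M, N]` can be sieved out because each of them exceeds `K.card`; what remains of
-- `Btilde C M` is `Btilde C N`, whose multiples have small mean.
lemma exists_modEq_mem_freeTranslates_Btilde (hm : IsInvariantMean m) (hDE : DavenportErdos m)
    (hC : 0 ∉ C) (hlim : Tendsto (fun N => m (multiplesZ (Btilde C N))) atTop (𝓝 0)) {M : ℕ}
    (hK : K.card ≤ M) (hQ : Q ∈ Nat.smoothNumbers (M + 1)) (a : ℤ) :
    ∃ x ∈ freeTranslates (Btilde C M) K, x ≡ a [ZMOD Q] := by
  have hsmall : ∀ᶠ N in atTop, K.card * m (multiplesZ (Btilde C N)) < 1 := by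
    have := hlim.const_mul (K.card : ℝ)
    rw [mul_zero] at this
    exact this.eventually_lt_const one_pos
  obtain ⟨N, hN, hMN⟩ := (hsmall.and (eventually_ge_atTop M)).exists
  set T : Finset ℕ := {p ∈ Finset.Ioc M N | p.Prime}
  have hT : ∀ p ∈ T, p.Prime ∧ M < p ∧ p ≤ N := fun p hp => by
    simpa [T, and_comm, and_assoc] using hp
  have : NeZero Q := ⟨Nat.ne_zero_of_mem_smoothNumbers hQ⟩
  have := neZero_prod fun h => Nat.not_prime_zero (hT 0 h).1
  have hprimes : 0 < m ({x | x ≡ a [ZMOD Q]} ∩ freeTranslates T K) := by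
    refine hm.inter_freeTranslates_primes_pos hDE (periodic_modEq a Q) ?_ fun p hp => ?_
    · rw [hm.modEq]
      exact inv_pos.mpr (by exact_mod_cast NeZero.pos Q)
    · obtain ⟨hp, hMp, -⟩ := hT p hp
      exact ⟨hp, (hp.smoothNumbers_coprime (Nat.smoothNumbers_mono hMp hQ)).symm, hK.trans_lt hMp⟩
  have hcop : ∀ c ∈ Btilde C N, (Q * ∏ p ∈ T, p).Coprime c := fun c hc =>
    (coprime_of_mem_Btilde (Nat.smoothNumbers_mono (Nat.succ_le_succ hMN) hQ) hc).mul_left <|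
      Nat.Coprime.prod_left fun p hp => coprime_of_mem_Btilde (Nat.mem_smoothNumbers_of_lt
        (hT p hp).1.pos (Nat.lt_succ_of_le (hT p hp).2.2)) hc
  have hrough : 0 < m ({x | x ≡ a [ZMOD Q]} ∩ freeTranslates T K ∩
      freeTranslates (Btilde C N) K) :=
    hm.inter_freeTranslates_pos hDE
      (periodic_inter (periodic_modEq a Q) (periodic_freeTranslates T K))
      (fun h => hC h.1) hcop hprimes hN
  obtain ⟨x, ⟨hxQ, hxT⟩, hxN⟩ : ({x | x ≡ a [ZMOD Q]} ∩ freeTranslates T K ∩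
      freeTranslates (Btilde C N) K).Nonempty := by
    by_contra! hempty
    exact hrough.ne' (hempty ▸ hm.empty)
  exact ⟨x, freeTranslates_Btilde_subset C K M N ⟨by simpa [T] using hxT, hxN⟩, hxQ⟩

end FreeTranslates

section SmoothRough

variable {B : Set ℕ} {K : Finset ℤ} {N : ℕ}

lemma mem_Bsmooth_iff {b : ℕ} : b ∈ Bsmooth B N ↔ b ∈ B ∧ b ∈ Nat.smoothNumbers (N + 1) := by
  simp only [Bsmooth, Set.mem_ofPred_eq, Nat.mem_smoothNumbers', Nat.lt_succ_iff]

lemma exists_smooth_mul_rough {b : ℕ} (hb : b ≠ 0) (N : ℕ) :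
    ∃ s ∈ Nat.smoothNumbers (N + 1), ∃ c, (∀ p : ℕ, p.Prime → p ∣ c → N < p) ∧ b = s * c := by
  induction b using Nat.recOnMul with
  | zero => contradiction
  | one => exact ⟨1, by simp [Nat.mem_smoothNumbers], 1, fun p hp h => (hp.not_dvd_one h).elim, rfl⟩
  | prime q hq =>
    by_cases hqN : q ≤ N
    · exact ⟨q, Nat.mem_smoothNumbers_of_lt hq.pos (Nat.lt_succ_of_le hqN), 1,
        fun p hp h => (hp.not_dvd_one h).elim, (mul_one q).symm⟩
    · refine ⟨1, by simp [Nat.mem_smoothNumbers], q, fun p hp h => ?_, (one_mul q).symm⟩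
      exact (Nat.prime_dvd_prime_iff_eq hp hq).mp h ▸ not_le.mp hqN
  | mul b b' ih ih' =>
    obtain ⟨s, hs, c, hc, rfl⟩ := ih (left_ne_zero_of_mul hb)
    obtain ⟨s', hs', c', hc', rfl⟩ := ih' (right_ne_zero_of_mul hb)
    exact ⟨s * s', Nat.mul_mem_smoothNumbers hs hs', c * c',
      fun p hp h => (hp.dvd_mul.mp h).elim (hc p hp) (hc' p hp), mul_mul_mul_comm _ _ _ _⟩

-- Dickson's lemma: the exponent vectors of the smooth elements form an antichain in `ℕ ^ (N + 1)`.
lemma Primitive.finite_Bsmooth (hprim : Primitive B) (N : ℕ) : (Bsmooth B N).Finite := by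
  let exponents : ℕ → Fin (N + 1) → ℕ := fun b p => b.factorization p
  have dvd_of_le {b b' : ℕ} (hb : b ∈ Bsmooth B N) (hb' : b' ∈ Bsmooth B N)
      (h : exponents b ≤ exponents b') : b ∣ b' := by
    have hbs := (mem_Bsmooth_iff.mp hb).2
    refine (Nat.factorization_prime_le_iff_dvd hbs.1 (mem_Bsmooth_iff.mp hb').2.1).mp fun p hp => ?_
    by_cases hpb : p ∣ b
    · exact h ⟨p, Nat.mem_smoothNumbers'.mp hbs p hp hpb⟩
    · simp [Nat.factorization_eq_zero_of_not_dvd hpb]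
  have eq_of_le {b b' : ℕ} (hb : b ∈ Bsmooth B N) (hb' : b' ∈ Bsmooth B N)
      (h : exponents b ≤ exponents b') : b = b' :=
    hprim b hb.1 b' hb'.1 (dvd_of_le hb hb' h)
  refine Set.Finite.of_finite_image (f := exponents) (WellQuasiOrderedLE.finite_of_isAntichain ?_)
    fun b hb b' hb' h => eq_of_le hb hb' h.le
  rintro _ ⟨b, hb, rfl⟩ _ ⟨b', hb', rfl⟩ hne hle
  exact hne (congrArg exponents (eq_of_le hb hb' hle))

lemma Primitive.exists_smooth_forall_Bsmooth_dvd (hprim : Primitive B) (N : ℕ) :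
    ∃ L ∈ Nat.smoothNumbers (N + 1), ∀ b ∈ Bsmooth B N, b ∣ L := by
  have hfin := hprim.finite_Bsmooth N
  refine ⟨∏ b ∈ hfin.toFinset, b, Finset.prod_induction _ (· ∈ Nat.smoothNumbers (N + 1))
    (fun _ _ => Nat.mul_mem_smoothNumbers) (by simp [Nat.mem_smoothNumbers]) fun b hb => ?_,
    fun b hb => Finset.dvd_prod_of_mem _ (hfin.mem_toFinset.mpr hb)⟩
  exact (mem_Bsmooth_iff.mp (hfin.mem_toFinset.mp hb)).2

lemma exists_modEq_forall_add_ne_zero {L : ℕ} (hL : L ≠ 0) (K : Finset ℤ) (a : ℤ) :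
    ∃ x, x ≡ a [ZMOD L] ∧ ∀ k ∈ K, x + k ≠ 0 := by
  have hinj : Function.Injective fun t : ℤ => a + L * t :=
    (add_right_injective a).comp (mul_right_injective₀ (Nat.cast_ne_zero.mpr hL))
  obtain ⟨_, ⟨t, rfl⟩, ht⟩ :=
    (Set.infinite_range_of_injective hinj).exists_notMem_finset (K.image (- ·))
  refine ⟨a + L * t, Int.modEq_iff_dvd.mpr ⟨-t, by ring⟩, fun k hk h => ht ?_⟩
  exact Finset.mem_image.mpr ⟨k, hk, (eq_neg_of_add_eq_zero_left h).symm⟩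

lemma factorial_mem_smoothNumbers (N : ℕ) : N.factorial ∈ Nat.smoothNumbers (N + 1) :=
  Nat.mem_smoothNumbers'.mpr fun _ hp h => Nat.lt_succ_of_le (hp.dvd_factorial.mp h)

lemma pow_mem_smoothNumbers {n : ℕ} (hn : n ∈ Nat.smoothNumbers N) (e : ℕ) :
    n ^ e ∈ Nat.smoothNumbers N :=
  Nat.mem_smoothNumbers'.mpr fun p hp h => Nat.mem_smoothNumbers'.mp hn p hp (hp.dvd_of_dvd_pow h)

-- A prime power `p ^ j ∣ x + k` with `j > e` would give `p ^ e ∣ y + k`, although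
-- `0 < |y + k| < 2 ^ e`.
lemma dvd_factorial_pow_of_modEq {e d : ℕ} {x y k : ℤ} (hd : d ∈ Nat.smoothNumbers (N + 1))
    (hyk : y + k ≠ 0) (he : (y + k).natAbs < 2 ^ e) (hxy : x ≡ y [ZMOD (N.factorial ^ e : ℕ)])
    (hdx : (d : ℤ) ∣ x + k) : d ∣ N.factorial ^ e := by
  refine (Nat.dvd_iff_prime_pow_dvd_dvd _ _).mpr fun p j hp hpd => ?_
  rcases j.eq_zero_or_pos with rfl | hj
  · simp
  have hpN : p ∣ N.factorial := hp.dvd_factorial.mpr <| Nat.lt_succ_iff.mp <|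
    Nat.mem_smoothNumbers'.mp hd p hp ((dvd_pow_self p hj.ne').trans hpd)
  rcases le_total j e with hje | hej
  · exact (pow_dvd_pow p hje).trans (pow_dvd_pow_of_dvd hpN e)
  · have hpx : ((p ^ e : ℕ) : ℤ) ∣ x + k :=
      (Int.natCast_dvd_natCast.mpr ((pow_dvd_pow p hej).trans hpd)).trans hdx
    have hpy : ((p ^ e : ℕ) : ℤ) ∣ y + k := by
      have hxy' := (hxy.add_right k).of_dvd (Int.natCast_dvd_natCast.mpr (pow_dvd_pow_of_dvd hpN e))
      exact hxy'.dvd_iff.mp hpx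
    have := Nat.le_of_dvd (Int.natAbs_pos.mpr hyk) (Int.natCast_dvd.mp hpy)
    exact absurd (this.trans_lt he) (Nat.pow_le_pow_left hp.two_le e).not_gt

lemma exists_modulus_forall_smooth_dvd {L : ℕ} (hL : L ∈ Nat.smoothNumbers (N + 1))
    (K : Finset ℤ) (a : ℤ) :
    ∃ Q ∈ Nat.smoothNumbers (N + 1), L ∣ Q ∧ ∃ y, y ≡ a [ZMOD L] ∧
      ∀ x, x ≡ y [ZMOD Q] → ∀ k ∈ K, ∀ d ∈ Nat.smoothNumbers (N + 1), (d : ℤ) ∣ x + k → d ∣ Q := by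
  obtain ⟨y, hya, hyK⟩ := exists_modEq_forall_add_ne_zero hL.1 K a
  obtain ⟨e, he⟩ : ∃ e, ∀ k ∈ K, (y + k).natAbs < 2 ^ e :=
    ⟨∑ k ∈ K, (y + k).natAbs, fun k hk =>
      (Finset.single_le_sum (f := fun k => (y + k).natAbs) (fun _ _ => Nat.zero_le _) hk).trans_lt
        Nat.lt_two_pow_self⟩
  refine ⟨L * N.factorial ^ e, Nat.mul_mem_smoothNumbers hL
    (pow_mem_smoothNumbers (factorial_mem_smoothNumbers N) e), dvd_mul_right _ _, y, hya,
    fun x hx k hk d hd hdx => dvd_mul_of_dvd_right ?_ L⟩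
  exact dvd_factorial_pow_of_modEq hd (hyK k hk) (he k hk)
    (hx.of_dvd (Int.natCast_dvd_natCast.mpr (dvd_mul_left _ _))) hdx

lemma IsTaut.exists_mem_freeTranslates_modEq (htaut : IsTaut B) (hB0 : 0 ∉ B)
    (hprim : Primitive B) (hK : K.card ≤ N) {a : ℤ} (ha : a ∈ freeTranslates (Bsmooth B N) K) :
    ∃ x ∈ freeTranslates B K, ∀ b ∈ Bsmooth B N, x ≡ a [ZMOD b] := by
  obtain ⟨m, hm, hDE⟩ := exists_isInvariantMean_davenportErdos
  obtain ⟨L, hL, hbL⟩ := hprim.exists_smooth_forall_Bsmooth_dvd N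
  obtain ⟨Q, hQ, hLQ, y, hya, hy⟩ := exists_modulus_forall_smooth_dvd hL K a
  obtain ⟨x, hxC, hxy⟩ := exists_modEq_mem_freeTranslates_Btilde hm hDE
    (C := ⋃ d ∈ Q.divisors, properCofactors B d)
    (by simp [zero_notMem_properCofactors hB0])
    (htaut.tendsto_multiplesZ_Btilde_biUnion_properCofactors hB0 hm hDE Q.divisors) hK hQ y
  have hxa : x ≡ a [ZMOD L] := (hxy.of_dvd (Int.natCast_dvd_natCast.mpr hLQ)).trans hya
  have hxb : ∀ b ∈ Bsmooth B N, x ≡ a [ZMOD b] := fun b hb =>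
    hxa.of_dvd (Int.natCast_dvd_natCast.mpr (hbL b hb))
  refine ⟨x, ?_, hxb⟩
  rintro k hk ⟨b, hb, hbx⟩
  obtain ⟨s, hs, c, hc, rfl⟩ := exists_smooth_mul_rough (ne_of_mem_of_not_mem hb hB0) N
  have hsQ : s ∈ Q.divisors := Nat.mem_divisors.mpr
    ⟨hy x hxy k hk s hs ((Int.natCast_dvd_natCast.mpr (dvd_mul_right s c)).trans hbx), hQ.1⟩
  rcases eq_or_ne c 1 with rfl | hc1
  · rw [mul_one] at hb hbx
    have hsB : s ∈ Bsmooth B N := mem_Bsmooth_iff.mpr ⟨hb, hs⟩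
    exact ha k hk ⟨s, hsB, ((hxb s hsB).add_right k).dvd_iff.mp hbx⟩
  · refine hxC k hk ⟨c, ⟨Set.mem_iUnion₂.mpr ⟨s, hsQ, hc1, hb⟩, hc⟩, ?_⟩
    exact (Int.natCast_dvd_natCast.mpr (dvd_mul_left c s)).trans hbx

end SmoothRough

section Dynamics

variable {B : Set ℕ}

lemma mem_closure_pi_discrete_iff {ι : Type*} {X : ι → Type*} [∀ i, TopologicalSpace (X i)]
    [∀ i, DiscreteTopology (X i)] {s : Set (∀ i, X i)} {x : ∀ i, X i} :
    x ∈ closure s ↔ ∀ I : Finset ι, ∃ y ∈ s, ∀ i ∈ I, y i = x i := by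
  refine mem_closure_iff.trans ⟨fun h I => ?_, fun h o ho hx => ?_⟩
  · obtain ⟨y, hyI, hys⟩ := h ((I : Set ι).pi fun i => {x i})
      (isOpen_set_pi I.finite_toSet fun _ _ => isOpen_discrete _) fun _ _ => rfl
    exact ⟨y, hys, hyI⟩
  · obtain ⟨I, u, hu, huo⟩ := isOpen_pi_iff.mp ho x hx
    obtain ⟨y, hys, hyx⟩ := h I
    exact ⟨y, huo fun i hi => hyx i hi ▸ (hu i hi).2, hys⟩

lemma phiW_diagEmb (B : Set ℕ) (a : ℤ) :
    phiW B ⟨diagEmb B a, subset_closure ⟨a, rfl⟩⟩ = fun n => eta B (n + a) := by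
  ext n
  have hdvd (b : ℕ) : (b : ℤ) ∣ n + a ↔ (a : ZMod b) + n = 0 := by
    rw [← CharP.intCast_eq_zero_iff (ZMod b) b, Int.cast_add, add_comm]
  simp [phiW, eta, freeZ, multiplesZ, diagEmb, hdvd]

lemma Xeta_subset_closure_range_phiW (B : Set ℕ) : Xeta B ⊆ closure (Set.range (phiW B)) := by
  refine closure_mono ?_
  rintro _ ⟨a, rfl⟩
  exact ⟨_, phiW_diagEmb B a⟩

lemma exists_int_forall_cast_eq (h : Hgrp B) {S : Set ℕ} (hS : S.Finite) :
    ∃ a : ℤ, ∀ b : B, ↑b ∈ S → (a : ZMod b) = (h : (b : B) → ZMod b) b := by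
  have hSB : {b : B | ↑b ∈ S}.Finite := hS.preimage Subtype.val_injective.injOn
  obtain ⟨_, ⟨a, rfl⟩, ha⟩ := mem_closure_pi_discrete_iff.mp h.2 hSB.toFinset
  exact ⟨a, fun b hb => ha b (hSB.mem_toFinset.mpr hb)⟩

lemma eventually_mem_Bsmooth {b : ℕ} (hb : b ∈ B) (hb0 : b ≠ 0) :
    ∀ᶠ N in atTop, b ∈ Bsmooth B N := by
  filter_upwards [eventually_ge_atTop b] with N hN
  exact ⟨hb, fun p _ hpb => (Nat.le_of_dvd hb0.bot_lt hpb).trans hN⟩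

lemma eventually_exists_mem_Bsmooth (hB0 : 0 ∉ B) (h : Hgrp B) (I : Finset ℤ) :
    ∀ᶠ N in atTop, ∀ k ∈ I, phiW B h k = false →
      ∃ b : B, ↑b ∈ Bsmooth B N ∧ (h : (b : B) → ZMod b) b + (k : ZMod b) = 0 := by
  refine (Filter.eventually_all_finset I).mpr fun k _ => ?_
  by_cases hk : phiW B h k = false
  · obtain ⟨b, hbk⟩ : ∃ b : B, (h : (b : B) → ZMod b) b + (k : ZMod b) = 0 := by
      simpa [phiW] using hk
    filter_upwards [eventually_mem_Bsmooth b.2 (ne_of_mem_of_not_mem b.2 hB0)] with N hN _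
    exact ⟨b, hN, hbk⟩
  · exact Eventually.of_forall fun _ hk' => absurd hk' hk

lemma IsTaut.phiW_mem_Xeta (htaut : IsTaut B) (hB0 : 0 ∉ B) (hprim : Primitive B) (h : Hgrp B) :
    phiW B h ∈ Xeta B := by
  refine mem_closure_pi_discrete_iff.mpr fun I => ?_
  obtain ⟨N, hN, hIN⟩ :=
    ((eventually_exists_mem_Bsmooth hB0 h I).and (eventually_ge_atTop I.card)).exists
  obtain ⟨a, ha⟩ := exists_int_forall_cast_eq h (hprim.finite_Bsmooth N)
  have dvd_iff (b : B) (hb : ↑b ∈ Bsmooth B N) (k : ℤ) :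
      (b : ℤ) ∣ a + k ↔ (h : (b : B) → ZMod b) b + (k : ZMod b) = 0 := by
    rw [← ha b hb, ← Int.cast_add, CharP.intCast_eq_zero_iff]
  have hfree : a ∈ freeTranslates (Bsmooth B N) (I.filter (phiW B h · = true)) := by
    rintro k hk ⟨b, hb, hbk⟩
    have hphi := (Finset.mem_filter.mp hk).2
    simp only [phiW, decide_eq_true_eq] at hphi
    exact hphi ⟨b, hb.1⟩ ((dvd_iff ⟨b, hb.1⟩ hb k).mp hbk)
  obtain ⟨x, hx, hxa⟩ := htaut.exists_mem_freeTranslates_modEq hB0 hprim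
    ((Finset.card_filter_le _ _).trans hIN) hfree
  refine ⟨_, ⟨x, rfl⟩, fun k hk => ?_⟩
  cases hphi : phiW B h k with
  | true => simpa [eta, add_comm] using hx k (Finset.mem_filter.mpr ⟨hk, hphi⟩)
  | false =>
    obtain ⟨b, hb, hbk⟩ := hN k hk hphi
    have hbx : (b : ℤ) ∣ k + x := by
      rw [add_comm, ((hxa b hb).add_right k).dvd_iff]
      exact (dvd_iff b hb k).mpr hbk
    simpa [eta, freeZ, multiplesZ] using ⟨b, b.2, hbx⟩

end Dynamics

/-- If `B` is taut, then the orbit closure `X_η` equals `X_φ`, the closure of `φ(H)`. -/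
theorem Xeta_eq_Xphi (B : Set ℕ) [∀ b : B, NeZero (b : ℕ)] (hB0 : 0 ∉ B)
    (hprim : Primitive B) (htaut : IsTaut B) :
    Xeta B = closure (Set.range (phiW B)) := by
  refine (Xeta_subset_closure_range_phiW B).antisymm (closure_minimal ?_ isClosed_closure)
  rintro _ ⟨h, rfl⟩
  exact htaut.phiW_mem_Xeta hB0 hprim h
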